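/- arXiv:1711.07409 — 3 statements merged into one kernel-verified Lean document; each statement's English description precedes it below -/
import Mathlib

section
/- Every nonzero TS-submodule M of C_b^∞(k^×) contains 𝕊 = C_c^∞(k^×), and the action of S on the quotient M/𝕊 is trivial. -/
noncomputable section

open scoped Classical

namespace PSW

/-! ### The affine group `λ.b : x ↦ λ·x + b` over a field `K`. -/

@[ext]
structure Aff (K : Type*) [Field K] where
  t : Kˣ
  s : K

namespace Aff

variable {K : Type*} [Field K]

instance : Mul (Aff K) := ⟨fun g h => ⟨g.t * h.t, g.s + (g.t : K) * h.s⟩⟩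
instance : One (Aff K) := ⟨⟨1, 0⟩⟩
instance : Inv (Aff K) := ⟨fun g => ⟨g.t⁻¹, -(((g.t⁻¹ : Kˣ) : K) * g.s)⟩⟩

@[simp] lemma mul_t (g h : Aff K) : (g * h).t = g.t * h.t := rfl
@[simp] lemma mul_s (g h : Aff K) : (g * h).s = g.s + (g.t : K) * h.s := rfl
@[simp] lemma one_t : (1 : Aff K).t = 1 := rfl
@[simp] lemma one_s : (1 : Aff K).s = 0 := rfl
@[simp] lemma inv_t (g : Aff K) : (g⁻¹).t = g.t⁻¹ := rfl
@[simp] lemma inv_s (g : Aff K) : (g⁻¹).s = -(((g.t⁻¹ : Kˣ) : K) * g.s) := rfl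

instance : Group (Aff K) where
  mul_assoc a b c := by
    ext
    · simp [mul_assoc]
    · simp only [mul_s, mul_t, Units.val_mul]; ring
  one_mul a := by ext <;> simp
  mul_one a := by ext <;> simp
  inv_mul_cancel a := by
    ext
    · simp
    · simp

/-- The element `x_λ` of the group `TS`. -/
def xT (u : Kˣ) : Aff K := ⟨u, 0⟩

/-- The element `s_b` of the group `TS`. -/
def sS (b : K) : Aff K := ⟨1, b⟩

@[simp] lemma xT_t (u : Kˣ) : (xT u : Aff K).t = u := rfl
@[simp] lemma xT_s (u : Kˣ) : (xT u : Aff K).s = 0 := rfl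
@[simp] lemma sS_t (b : K) : (sS b : Aff K).t = 1 := rfl
@[simp] lemma sS_s (b : K) : (sS b : Aff K).s = b := rfl

/-- `T ≅ k^×` as a subgroup of `TS`. -/
def xTHom : Kˣ →* Aff K where
  toFun := xT
  map_one' := rfl
  map_mul' u v := by ext <;> simp [xT]

@[simp] lemma xTHom_apply (u : Kˣ) : (xTHom u : Aff K) = xT u := rfl

lemma mul_sS (g : Aff K) (b : K) : g * sS b = sS ((g.t : K) * b) * g := by
  ext
  · simp
  · simp [add_comm]

lemma sS_mul (b : K) (g : Aff K) : sS b * g = g * sS (((g.t⁻¹ : Kˣ) : K) * b) := by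
  ext
  · simp
  · simp [Units.mul_inv_cancel_left, add_comm]

lemma aff_decomp (g : Aff K) : g = xT g.t * sS (((g.t⁻¹ : Kˣ) : K) * g.s) := by
  ext
  · simp
  · simp [Units.mul_inv_cancel_left]

instance [TopologicalSpace K] : TopologicalSpace (Aff K) :=
  TopologicalSpace.induced (fun g : Aff K => ((g.t, g.s) : Kˣ × K)) inferInstance

end Aff

/-! ### Generalities on representations of a monoid on complex vector spaces. -/

namespace GRep

variable {G : Type*} [Monoid G]

section MonoidModules

variable {V W : Type*} [AddCommMonoid V] [Module ℂ V] [AddCommMonoid W] [Module ℂ W]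

/-- A submodule invariant under the representation. -/
def Invariant (ρ : Representation ℂ G V) (U : Submodule ℂ V) : Prop :=
  ∀ (g : G) (v : V), v ∈ U → ρ g v ∈ U

/-- Equivariance of a linear map with respect to two representations. -/
def Equivariant (ρ : Representation ℂ G V) (σ : Representation ℂ G W) (f : V →ₗ[ℂ] W) : Prop :=
  ∀ (g : G) (v : V), f (ρ g v) = σ g (f v)

/-- Isomorphism of representations. -/
def Iso (ρ : Representation ℂ G V) (σ : Representation ℂ G W) : Prop :=
  ∃ e : V ≃ₗ[ℂ] W, ∀ (g : G) (v : V), e (ρ g v) = σ g (e v)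

/-- Irreducibility. -/
def Irred (ρ : Representation ℂ G V) : Prop :=
  Nontrivial V ∧ ∀ U : Submodule ℂ V, Invariant ρ U → U = ⊥ ∨ U = ⊤

/-- Subrepresentation on an invariant submodule. -/
def sub (ρ : Representation ℂ G V) {U : Submodule ℂ V} (hU : Invariant ρ U) :
    Representation ℂ G ↥U where
  toFun g := (ρ g).restrict fun v hv => hU g v hv
  map_one' := by
    apply LinearMap.ext; intro v; apply Subtype.ext
    simp [LinearMap.restrict_apply]
  map_mul' g h := by
    apply LinearMap.ext; intro v; apply Subtype.ext
    simp [LinearMap.restrict_apply]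

@[simp] lemma sub_apply (ρ : Representation ℂ G V) {U : Submodule ℂ V} (hU : Invariant ρ U)
    (g : G) (v : ↥U) : ((sub ρ hU g v : ↥U) : V) = ρ g (v : V) := rfl

lemma ker_invariant (ρ : Representation ℂ G V) (σ : Representation ℂ G W)
    (f : V →ₗ[ℂ] W) (hf : Equivariant ρ σ f) : Invariant ρ (LinearMap.ker f) := by
  intro g v hv
  rw [LinearMap.mem_ker] at hv ⊢
  rw [hf g v, hv, map_zero]

lemma range_invariant (ρ : Representation ℂ G V) (σ : Representation ℂ G W)
    (f : V →ₗ[ℂ] W) (hf : Equivariant ρ σ f) : Invariant σ (LinearMap.range f) := by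
  rintro g w ⟨v, rfl⟩
  exact ⟨ρ g v, hf g v⟩

lemma map_invariant (ρ : Representation ℂ G V) (σ : Representation ℂ G W)
    (f : V →ₗ[ℂ] W) (hf : Equivariant ρ σ f) (U : Submodule ℂ V) (hU : Invariant ρ U) :
    Invariant σ (U.map f) := by
  rintro g w ⟨v, hv, rfl⟩
  exact ⟨ρ g v, hU g v hv, hf g v⟩

end MonoidModules

section GroupModules

variable {V W : Type*} [AddCommGroup V] [Module ℂ V] [AddCommGroup W] [Module ℂ W]

/-- Quotient representation. -/
def quot (ρ : Representation ℂ G V) (U : Submodule ℂ V) (hU : Invariant ρ U) :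
    Representation ℂ G (V ⧸ U) where
  toFun g := U.mapQ U (ρ g) fun v hv => hU g v hv
  map_one' := by
    apply LinearMap.ext; intro x
    obtain ⟨v, rfl⟩ := Submodule.Quotient.mk_surjective U x
    simp [Submodule.mapQ_apply]
  map_mul' g h := by
    apply LinearMap.ext; intro x
    obtain ⟨v, rfl⟩ := Submodule.Quotient.mk_surjective U x
    simp [Submodule.mapQ_apply]

@[simp] lemma quot_apply (ρ : Representation ℂ G V) (U : Submodule ℂ V) (hU : Invariant ρ U)
    (g : G) (v : V) :
    quot ρ U hU g (Submodule.Quotient.mk v) = Submodule.Quotient.mk (ρ g v) := rfl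

/-- Subquotient representation on `B/A`. -/
def subquot (ρ : Representation ℂ G V) {A B : Submodule ℂ V}
    (hA : Invariant ρ A) (hB : Invariant ρ B) :
    Representation ℂ G (↥B ⧸ A.comap B.subtype) :=
  quot (sub ρ hB) (A.comap B.subtype) fun g v hv => hA g v.1 hv

lemma mkQ_equivariant (ρ : Representation ℂ G V) (U : Submodule ℂ V) (hU : Invariant ρ U) :
    Equivariant ρ (quot ρ U hU) U.mkQ := by
  intro g v
  show Submodule.Quotient.mk (ρ g v) = quot ρ U hU g (Submodule.Quotient.mk v)
  rw [quot_apply]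

end GroupModules

end GRep

/-! ### TS-modules: representations of the affine group. -/

/-- A `TS`-module structure on `V` is a representation of the group `TS ≅ Gl_a(1)`. -/
abbrev Rep (K : Type*) [Field K] (V : Type*) [AddCommGroup V] [Module ℂ V] :=
  Representation ℂ (Aff K) V

section RepDefs

open Aff

variable {K : Type*} [Field K]
variable {V W : Type*} [AddCommGroup V] [Module ℂ V] [AddCommGroup W] [Module ℂ W]

/-- Smoothness: every vector has open stabilizer. -/
def IsSmoothRep [TopologicalSpace K] (ρ : Rep K V) : Prop :=
  ∀ v : V, IsOpen {g : Aff K | ρ g v = v}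

/-- Smoothness of a `T`-module, i.e. of a representation of `T ≅ k^×`. -/
def TIsSmooth {X : Type*} [AddCommMonoid X] [Module ℂ X] [TopologicalSpace K]
    (τ : Representation ℂ Kˣ X) : Prop :=
  ∀ x : X, IsOpen {u : Kˣ | τ u x = x}

/-- Smooth character of `T ≅ k^×` (open kernel, equivalently locally constant). -/
def SmoothMulChar [TopologicalSpace K] (χ : Kˣ →* ℂˣ) : Prop :=
  IsOpen {u : Kˣ | χ u = 1}

/-- The space `V^S` of `S`-invariants. -/
def sInv (ρ : Rep K V) : Submodule ℂ V where
  carrier := {v | ∀ b : K, ρ (sS b) v = v}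
  zero_mem' := fun b => map_zero _
  add_mem' {a b} ha hb := fun c => by rw [map_add, ha c, hb c]
  smul_mem' c v hv := fun b => by rw [map_smul, hv b]

@[simp] lemma mem_sInv (ρ : Rep K V) (v : V) :
    v ∈ sInv ρ ↔ ∀ b : K, ρ (sS b) v = v := Iff.rfl

/-- The `χ`-eigenspace `X^{T,χ}` of a `T`-module. -/
def tEigenT {X : Type*} [AddCommMonoid X] [Module ℂ X]
    (τ : Representation ℂ Kˣ X) (χ : Kˣ →* ℂˣ) : Submodule ℂ X where
  carrier := {x | ∀ u : Kˣ, τ u x = (χ u : ℂ) • x}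
  zero_mem' := fun u => by simp
  add_mem' {a b} ha hb := fun u => by rw [map_add, ha u, hb u, smul_add]
  smul_mem' c x hx := fun u => by rw [map_smul, hx u]; exact smul_comm c ((χ u : ℂ)) x

@[simp] lemma mem_tEigenT {X : Type*} [AddCommMonoid X] [Module ℂ X]
    (τ : Representation ℂ Kˣ X) (χ : Kˣ →* ℂˣ) (x : X) :
    x ∈ tEigenT τ χ ↔ ∀ u : Kˣ, τ u x = (χ u : ℂ) • x := Iff.rfl

/-- The `χ`-eigenspace `V^{T,χ}` of a `TS`-module. -/
def tEigen (ρ : Rep K V) (χ : Kˣ →* ℂˣ) : Submodule ℂ V := tEigenT (ρ.comp xTHom) χ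

/-- The kernel of the projection to the `S`-coinvariants `V_S`. -/
def sCoinvKer (ρ : Rep K V) : Submodule ℂ V :=
  Submodule.span ℂ {w : V | ∃ (b : K) (v : V), w = ρ (sS b) v - v}

/-- The kernel of the projection to the twisted coinvariants `V_{S,ψ'}`. -/
def sTwistKer (ρ : Rep K V) (ψ' : AddChar K ℂ) : Submodule ℂ V :=
  Submodule.span ℂ {w : V | ∃ (b : K) (v : V), w = ρ (sS b) v - ψ' b • v}

/-- The kernel of the projection to the `χ`-coinvariants `X_{T,χ}` of a `T`-module. -/
def tTwistKerT {X : Type*} [AddCommGroup X] [Module ℂ X]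
    (τ : Representation ℂ Kˣ X) (χ : Kˣ →* ℂˣ) : Submodule ℂ X :=
  Submodule.span ℂ {w : X | ∃ (u : Kˣ) (x : X), w = τ u x - (χ u : ℂ) • x}

/-- The kernel of the projection to the `χ`-coinvariants `V_{T,χ}` of a `TS`-module. -/
def tTwistKer (ρ : Rep K V) (χ : Kˣ →* ℂˣ) : Submodule ℂ V := tTwistKerT (ρ.comp xTHom) χ

lemma sCoinvKer_invariant (ρ : Rep K V) : GRep.Invariant ρ (sCoinvKer ρ) := by
  intro g v hv
  have h : sCoinvKer ρ ≤ Submodule.comap (ρ g) (sCoinvKer ρ) := by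
    refine Submodule.span_le.2 ?_
    rintro w ⟨b, v', rfl⟩
    simp only [SetLike.mem_coe, Submodule.mem_comap, map_sub]
    have h1 : ρ g (ρ (sS b) v') = ρ (sS ((g.t : K) * b)) (ρ g v') := by
      rw [← Module.End.mul_apply, ← map_mul, mul_sS, map_mul, Module.End.mul_apply]
    rw [h1]
    exact Submodule.subset_span ⟨(g.t : K) * b, ρ g v', rfl⟩
  exact h hv

lemma sInv_invariant (ρ : Rep K V) : GRep.Invariant ρ (sInv ρ) := by
  intro g v hv
  rw [mem_sInv] at hv ⊢
  intro b
  have h1 : ρ (sS b) (ρ g v) = ρ g (ρ (sS (((g.t⁻¹ : Kˣ) : K) * b)) v) := by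
    rw [← Module.End.mul_apply, ← map_mul, sS_mul, map_mul, Module.End.mul_apply]
  rw [h1, hv _]

/-- The `S`-coinvariants `π₀(V) = V_S` as a `TS`-module (`S` acting trivially). -/
def piZeroRep (ρ : Rep K V) : Rep K (V ⧸ sCoinvKer ρ) :=
  GRep.quot ρ (sCoinvKer ρ) (sCoinvKer_invariant ρ)

/-- The `S`-coinvariants `π₀(V) = V_S` as a `T`-module. -/
def piZeroT (ρ : Rep K V) : Representation ℂ Kˣ (V ⧸ sCoinvKer ρ) :=
  (piZeroRep ρ).comp xTHom

/-- The `T`-module structure on `κ(V) = V^S`. -/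
def sInvT (ρ : Rep K V) : Representation ℂ Kˣ ↥(sInv ρ) :=
  (GRep.sub ρ (sInv_invariant ρ)).comp xTHom

/-- A `TS`-module is perfect if all its eigenspaces `V^{T,χ}` for smooth `χ` vanish. -/
def Perfect [TopologicalSpace K] (ρ : Rep K V) : Prop :=
  ∀ χ : Kˣ →* ℂˣ, SmoothMulChar χ → tEigen ρ χ = ⊥

/-- A finite-dimensional `T`-module is cyclic if each generalized eigenspace is a single
Jordan block; equivalently all eigenspaces `X^{T,χ}` have dimension at most one. -/
def TCyclic {X : Type*} [AddCommGroup X] [Module ℂ X]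
    (τ : Representation ℂ Kˣ X) : Prop :=
  ∀ χ : Kˣ →* ℂˣ, Module.finrank ℂ ↥(tEigenT τ χ) ≤ 1

lemma sCoinvKer_le_comap (ρ : Rep K V) (σ : Rep K W)
    (f : V →ₗ[ℂ] W) (hf : GRep.Equivariant ρ σ f) :
    sCoinvKer ρ ≤ (sCoinvKer σ).comap f := by
  refine Submodule.span_le.2 ?_
  rintro w ⟨b, v, rfl⟩
  simp only [SetLike.mem_coe, Submodule.mem_comap, map_sub]
  rw [hf]
  exact Submodule.subset_span ⟨b, f v, rfl⟩

/-- The map induced by an equivariant map on the `S`-coinvariants `π₀`. -/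
def piZeroMap (ρ : Rep K V) (σ : Rep K W) (f : V →ₗ[ℂ] W) (hf : GRep.Equivariant ρ σ f) :
    (V ⧸ sCoinvKer ρ) →ₗ[ℂ] (W ⧸ sCoinvKer σ) :=
  Submodule.mapQ _ _ f (sCoinvKer_le_comap ρ σ f hf)

lemma piZeroMap_equivariant (ρ : Rep K V) (σ : Rep K W) (f : V →ₗ[ℂ] W)
    (hf : GRep.Equivariant ρ σ f) :
    GRep.Equivariant (piZeroRep ρ) (piZeroRep σ) (piZeroMap ρ σ f hf) := by
  intro g x
  obtain ⟨v, rfl⟩ := Submodule.Quotient.mk_surjective _ x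
  show piZeroMap ρ σ f hf (piZeroRep ρ g (Submodule.Quotient.mk v))
      = piZeroRep σ g (piZeroMap ρ σ f hf (Submodule.Quotient.mk v))
  rw [show piZeroRep ρ g (Submodule.Quotient.mk v) = Submodule.Quotient.mk (ρ g v) from rfl]
  rw [show piZeroMap ρ σ f hf (Submodule.Quotient.mk v) = Submodule.Quotient.mk (f v) from rfl]
  rw [show piZeroMap ρ σ f hf (Submodule.Quotient.mk (ρ g v))
      = Submodule.Quotient.mk (f (ρ g v)) from rfl]
  rw [show piZeroRep σ g (Submodule.Quotient.mk (f v)) = Submodule.Quotient.mk (σ g (f v)) from rfl]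
  rw [hf]

lemma kappaImg_invariant (ρ : Rep K V) :
    GRep.Invariant (piZeroT ρ) ((sInv ρ).map (sCoinvKer ρ).mkQ) := by
  rintro u w ⟨v, hv, rfl⟩
  refine ⟨ρ (xT u) v, sInv_invariant ρ (xT u) v hv, ?_⟩
  rfl

end RepDefs

/-! ### Composition series and degree. -/

/-- A composition series for a `TS`-module, witnessing finite length: a maximal chain of
invariant submodules (the subquotients are then irreducible). -/
structure CompSeries {K : Type*} [Field K] {V : Type*} [AddCommGroup V] [Module ℂ V]
    (ρ : Rep K V) where
  n : ℕ
  W : ℕ → Submodule ℂ V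
  bot : W 0 = ⊥
  top : W n = ⊤
  inv : ∀ i, GRep.Invariant ρ (W i)
  lt : ∀ i < n, W i < W (i + 1)
  maximal : ∀ i < n, ∀ C : Submodule ℂ V, GRep.Invariant ρ C → W i ≤ C → C ≤ W (i + 1) →
    C = W i ∨ C = W (i + 1)

/-- The number of Jordan–Hölder constituents of a composition series isomorphic to a given
representation `σ` (applied with `σ = 𝕊`, this is the degree). -/
def CompSeries.deg {K : Type*} [Field K] {V : Type*} [AddCommGroup V] [Module ℂ V]
    {ρ : Rep K V} (c : CompSeries ρ) {W₀ : Type*} [AddCommMonoid W₀] [Module ℂ W₀]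
    (σ : Representation ℂ (Aff K) W₀) : ℕ :=
  (Finset.univ.filter fun i : Fin c.n =>
    GRep.Iso (GRep.subquot ρ (c.inv i.1) (c.inv (i.1 + 1))) σ).card

/-! ### Fiber products of a `T`-module with a `TS`-module over a `T`-module. -/

section Fiber

open Aff

variable {K : Type*} [Field K]
variable {X Y E : Type*} [AddCommGroup X] [Module ℂ X] [AddCommGroup Y] [Module ℂ Y]
  [AddCommGroup E] [Module ℂ E]

/-- The product `TS`-module `X × E` where `S` acts trivially on the `T`-module `X`. -/
def prodRepTE (τ : Representation ℂ Kˣ X) (ρ : Rep K E) : Rep K (X × E) where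
  toFun g := (τ g.t).prodMap (ρ g)
  map_one' := by
    apply LinearMap.ext; rintro ⟨x, v⟩
    simp
  map_mul' g h := by
    apply LinearMap.ext; rintro ⟨x, v⟩
    simp [map_mul]

/-- The underlying space of the fiber product `𝔼[f] = X ×_Y E`. -/
def fiberKer (f : X →ₗ[ℂ] Y) (q : E →ₗ[ℂ] Y) : Submodule ℂ (X × E) :=
  LinearMap.ker (f.comp (LinearMap.fst ℂ X E) - q.comp (LinearMap.snd ℂ X E))

lemma mem_fiberKer (f : X →ₗ[ℂ] Y) (q : E →ₗ[ℂ] Y) (p : X × E) :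
    p ∈ fiberKer f q ↔ f p.1 = q p.2 := by
  simp [fiberKer, sub_eq_zero]

lemma fiber_invariant (τX : Representation ℂ Kˣ X) (ρE : Rep K E)
    (τY : Representation ℂ Kˣ Y) (f : X →ₗ[ℂ] Y) (q : E →ₗ[ℂ] Y)
    (hf : ∀ (u : Kˣ) (x : X), f (τX u x) = τY u (f x))
    (hq : sCoinvKer ρE ≤ LinearMap.ker q)
    (hqT : ∀ (u : Kˣ) (v : E), q (ρE (xT u) v) = τY u (q v)) :
    GRep.Invariant (prodRepTE τX ρE) (fiberKer f q) := by
  intro g p hp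
  rw [mem_fiberKer] at hp ⊢
  have hsb : q (ρE (sS (((g.t⁻¹ : Kˣ) : K) * g.s)) p.2) = q p.2 := by
    have h1 : ρE (sS (((g.t⁻¹ : Kˣ) : K) * g.s)) p.2 - p.2 ∈ sCoinvKer ρE :=
      Submodule.subset_span ⟨_, _, rfl⟩
    have h2 := hq h1
    rw [LinearMap.mem_ker, map_sub, sub_eq_zero] at h2
    exact h2
  have hdecomp : ρE g p.2 = ρE (xT g.t) (ρE (sS (((g.t⁻¹ : Kˣ) : K) * g.s)) p.2) := by
    conv_lhs => rw [aff_decomp g]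
    rw [map_mul, Module.End.mul_apply]
  have h1 : ((prodRepTE τX ρE) g p).1 = τX g.t p.1 := rfl
  have h2 : ((prodRepTE τX ρE) g p).2 = ρE g p.2 := rfl
  rw [h1, h2, hf, hp, hdecomp, hqT, hsb]

end Fiber

/-! ### Jordan blocks of finite-dimensional `T`-modules. -/

section Jordan

variable {K : Type*} [Field K]
variable {X : Type*} [AddCommGroup X] [Module ℂ X]

/-- A Jordan block of a `T`-module: a nonzero indecomposable invariant direct summand. -/
def IsJordanBlock (τ : Representation ℂ Kˣ X) (J : Submodule ℂ X) : Prop :=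
  J ≠ ⊥ ∧ GRep.Invariant τ J ∧ (∃ C : Submodule ℂ X, GRep.Invariant τ C ∧ IsCompl J C) ∧
    ∀ A B : Submodule ℂ X, GRep.Invariant τ A → GRep.Invariant τ B → A ≤ J → B ≤ J →
      A ⊓ B = ⊥ → A ⊔ B = J → A = ⊥ ∨ B = ⊥

end Jordan

/-! ### Invariants and coinvariants for a normal subgroup of an arbitrary group. -/

section Grp

variable {Γ : Type*} [Group Γ]
variable {V W : Type*} [AddCommGroup V] [Module ℂ V] [AddCommGroup W] [Module ℂ W]

/-- Invariants `V^N` under a subgroup `N`. -/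
def grpInv (ρ : Representation ℂ Γ V) (N : Subgroup Γ) : Submodule ℂ V where
  carrier := {v | ∀ n ∈ N, ρ n v = v}
  zero_mem' := fun n _ => map_zero _
  add_mem' {a b} ha hb := fun n hn => by rw [map_add, ha n hn, hb n hn]
  smul_mem' c v hv := fun n hn => by rw [map_smul, hv n hn]

@[simp] lemma mem_grpInv (ρ : Representation ℂ Γ V) (N : Subgroup Γ) (v : V) :
    v ∈ grpInv ρ N ↔ ∀ n ∈ N, ρ n v = v := Iff.rfl

/-- The kernel of the projection to the coinvariants `V_N` under a subgroup `N`. -/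
def grpCoinvKer (ρ : Representation ℂ Γ V) (N : Subgroup Γ) : Submodule ℂ V :=
  Submodule.span ℂ {w : V | ∃ n ∈ N, ∃ v : V, w = ρ n v - v}

lemma grpInv_invariant (ρ : Representation ℂ Γ V) (N : Subgroup Γ) [hN : N.Normal] :
    GRep.Invariant ρ (grpInv ρ N) := by
  intro γ v hv
  rw [mem_grpInv] at hv ⊢
  intro n hn
  have hmem : γ⁻¹ * n * γ ∈ N := by
    have := hN.conj_mem n hn γ⁻¹
    simpa using this
  have key : ρ n (ρ γ v) = ρ γ (ρ (γ⁻¹ * n * γ) v) := by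
    rw [← Module.End.mul_apply, ← map_mul, ← Module.End.mul_apply, ← map_mul]
    congr 1
    group
  rw [key, hv _ hmem]

lemma grpCoinvKer_invariant (ρ : Representation ℂ Γ V) (N : Subgroup Γ) [hN : N.Normal] :
    GRep.Invariant ρ (grpCoinvKer ρ N) := by
  intro γ v hv
  have h : grpCoinvKer ρ N ≤ Submodule.comap (ρ γ) (grpCoinvKer ρ N) := by
    refine Submodule.span_le.2 ?_
    rintro w ⟨n, hn, v', rfl⟩
    simp only [SetLike.mem_coe, Submodule.mem_comap, map_sub]
    have key : ρ γ (ρ n v') = ρ (γ * n * γ⁻¹) (ρ γ v') := by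
      rw [← Module.End.mul_apply, ← map_mul, ← Module.End.mul_apply, ← map_mul]
      congr 1
      group
    rw [key]
    exact Submodule.subset_span ⟨γ * n * γ⁻¹, hN.conj_mem n hn γ, ρ γ v', rfl⟩
  exact h hv

/-- The map induced on `N`-invariants by an equivariant map. -/
def grpInvRestrict (ρ : Representation ℂ Γ V) (σ : Representation ℂ Γ W) (N : Subgroup Γ)
    (f : V →ₗ[ℂ] W) (hf : GRep.Equivariant ρ σ f) : ↥(grpInv ρ N) →ₗ[ℂ] ↥(grpInv σ N) :=
  f.restrict (fun v hv => by
    rw [mem_grpInv] at hv ⊢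
    intro n hn
    rw [← hf n v, hv n hn])

lemma grpCoinvKer_le_comap (ρ : Representation ℂ Γ V) (σ : Representation ℂ Γ W) (N : Subgroup Γ)
    (f : V →ₗ[ℂ] W) (hf : GRep.Equivariant ρ σ f) :
    grpCoinvKer ρ N ≤ (grpCoinvKer σ N).comap f := by
  refine Submodule.span_le.2 ?_
  rintro w ⟨n, hn, v, rfl⟩
  simp only [SetLike.mem_coe, Submodule.mem_comap, map_sub]
  rw [hf]
  exact Submodule.subset_span ⟨n, hn, f v, rfl⟩

/-- The map induced on `N`-coinvariants by an equivariant map. -/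
def grpCoinvMap (ρ : Representation ℂ Γ V) (σ : Representation ℂ Γ W) (N : Subgroup Γ)
    (f : V →ₗ[ℂ] W) (hf : GRep.Equivariant ρ σ f) :
    (V ⧸ grpCoinvKer ρ N) →ₗ[ℂ] (W ⧸ grpCoinvKer σ N) :=
  Submodule.mapQ _ _ f (grpCoinvKer_le_comap ρ σ N f hf)

end Grp

/-! ### Tate L-factors of finite-dimensional `T`-modules. -/

section Lfactor

variable {K : Type*} [NontriviallyNormedField K]
variable {X : Type*} [AddCommGroup X] [Module ℂ X]

/-- The part of a `T`-module where the `χ`-twisted action is unramified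
(trivial on the norm-one units). -/
def unrPart (τ : Representation ℂ Kˣ X) (χ : Kˣ →* ℂˣ) : Submodule ℂ X where
  carrier := {x | ∀ u : Kˣ, ‖(u : K)‖ = 1 → (χ u : ℂ) • τ u x = x}
  zero_mem' := fun u _ => by simp
  add_mem' {a b} ha hb := fun u hu => by rw [map_add, smul_add, ha u hu, hb u hu]
  smul_mem' c x hx := fun u hu => by
    rw [map_smul, smul_comm, hx u hu]

lemma unrPart_stable (τ : Representation ℂ Kˣ X) (χ : Kˣ →* ℂˣ) (ϖ : Kˣ) :
    ∀ x ∈ unrPart τ χ, ((χ ϖ : ℂ) • τ ϖ) x ∈ unrPart τ χ := by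
  intro x hx u hu
  have comm : τ u (τ ϖ x) = τ ϖ (τ u x) := by
    rw [← Module.End.mul_apply, ← map_mul, mul_comm, map_mul, Module.End.mul_apply]
  calc (χ u : ℂ) • τ u (((χ ϖ : ℂ) • τ ϖ) x)
      = (χ ϖ : ℂ) • ((χ u : ℂ) • τ u (τ ϖ x)) := by
        rw [LinearMap.smul_apply, map_smul, smul_comm]
    _ = (χ ϖ : ℂ) • τ ϖ ((χ u : ℂ) • τ u x) := by rw [comm, map_smul]
    _ = ((χ ϖ : ℂ) • τ ϖ) x := by rw [hx u hu, LinearMap.smul_apply]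

/-- The twisted uniformizer action on the unramified part. -/
def twistOp (τ : Representation ℂ Kˣ X) (χ : Kˣ →* ℂˣ) (ϖ : Kˣ) :
    ↥(unrPart τ χ) →ₗ[ℂ] ↥(unrPart τ χ) :=
  LinearMap.restrict ((χ ϖ : ℂ) • τ ϖ) (unrPart_stable τ χ ϖ)

/-- The Tate `L`-factor `L(s, χ ⊗ X) = det(1 - q^{-s}·(χ·τ)(ϖ) | X^{unr,χ})⁻¹` of a
(finite-dimensional) `T`-module `X`, relative to a uniformizer `ϖ`. -/
def Lfactor (τ : Representation ℂ Kˣ X) (χ : Kˣ →* ℂˣ) (ϖ : Kˣ) (s : ℂ) : ℂ :=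
  (LinearMap.det (LinearMap.id - (‖(ϖ : K)‖ : ℂ) ^ s • twistOp τ χ ϖ))⁻¹

end Lfactor

/-! ### The concrete `TS`-modules `𝕊`, `C_c^∞(k)`, `C_b^∞(k^×)` and `𝔼[χ]`. -/

section Concrete

open Aff

variable (K : Type*) [NontriviallyNormedField K]

/-- The representation of `TS` on functions on `k^×`:
`(s_b g)(x) = ψ(bx) g(x)`, `(x_λ g)(x) = g(xλ)`. -/
def repCx (ψ : AddChar K ℂ) : Rep K (Kˣ → ℂ) where
  toFun g :=
    { toFun := fun f x => ψ (g.s * (x : K)) * f (x * g.t)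
      map_add' := fun f₁ f₂ => by funext x; simp [mul_add]
      map_smul' := fun c f => by
        funext x
        simp only [Pi.smul_apply, smul_eq_mul, RingHom.id_apply]
        ring }
  map_one' := by
    apply LinearMap.ext; intro f; funext x
    simp
  map_mul' g h := by
    apply LinearMap.ext; intro f; funext x
    show ψ ((g.s + (g.t : K) * h.s) * (x : K)) * f (x * (g.t * h.t))
        = ψ (g.s * (x : K)) * (ψ (h.s * ((x * g.t : Kˣ) : K)) * f (x * g.t * h.t))
    have harg : (g.s + (g.t : K) * h.s) * (x : K)
        = g.s * (x : K) + h.s * ((x * g.t : Kˣ) : K) := by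
      push_cast
      ring
    rw [harg, AddChar.map_add_eq_mul, ← mul_assoc x g.t h.t]
    ring

@[simp] lemma repCx_apply (ψ : AddChar K ℂ) (g : Aff K) (f : Kˣ → ℂ) (x : Kˣ) :
    repCx K ψ g f x = ψ (g.s * (x : K)) * f (x * g.t) := rfl

/-- The `χ`-twisted representation of `TS` on functions on `k`:
`(s_b g)(x) = ψ(bx) g(x)`, `(x_λ g)(x) = χ(λ) g(xλ)`.  (Take `χ = 1` for the
untwisted action on `C_c^∞(k)`; the module `𝔼[χ]` is `C_c^∞(k)` with the twisted action.) -/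
def repCc (ψ : AddChar K ℂ) (χ : Kˣ →* ℂˣ) : Rep K (K → ℂ) where
  toFun g :=
    { toFun := fun f x => (χ g.t : ℂ) * ψ (g.s * x) * f (x * (g.t : K))
      map_add' := fun f₁ f₂ => by funext x; simp [mul_add]
      map_smul' := fun c f => by
        funext x
        simp only [Pi.smul_apply, smul_eq_mul, RingHom.id_apply]
        ring }
  map_one' := by
    apply LinearMap.ext; intro f; funext x
    simp
  map_mul' g h := by
    apply LinearMap.ext; intro f; funext x
    show (χ (g.t * h.t) : ℂ) * ψ ((g.s + (g.t : K) * h.s) * x) * f (x * ((g.t * h.t : Kˣ) : K))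
        = (χ g.t : ℂ) * ψ (g.s * x) * ((χ h.t : ℂ) * ψ (h.s * (x * (g.t : K)))
            * f (x * (g.t : K) * (h.t : K)))
    have harg : (g.s + (g.t : K) * h.s) * x = g.s * x + h.s * (x * (g.t : K)) := by ring
    have harg2 : x * ((g.t * h.t : Kˣ) : K) = x * (g.t : K) * (h.t : K) := by
      push_cast
      ring
    rw [harg, harg2, AddChar.map_add_eq_mul, map_mul]
    push_cast
    ring

@[simp] lemma repCc_apply (ψ : AddChar K ℂ) (χ : Kˣ →* ℂˣ) (g : Aff K) (f : K → ℂ) (x : K) :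
    repCc K ψ χ g f x = (χ g.t : ℂ) * ψ (g.s * x) * f (x * (g.t : K)) := rfl

/-- The one-dimensional `TS`-module `ℂ_χ` on which `S` acts trivially and `x_λ` by `χ(λ)`. -/
def chiRep (χ : Kˣ →* ℂˣ) : Rep K ℂ where
  toFun g := (χ g.t : ℂ) • LinearMap.id
  map_one' := by
    apply LinearMap.ext; intro c
    simp
  map_mul' g h := by
    apply LinearMap.ext; intro c
    simp only [mul_t, map_mul, LinearMap.smul_apply, LinearMap.id_apply, Module.End.mul_apply,
      Units.val_mul, smul_eq_mul]
    ring

/-- `C_c^∞(k)`: locally constant, compactly supported functions on `k`. -/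
def CcK : Submodule ℂ (K → ℂ) where
  carrier := {f | IsLocallyConstant f ∧ HasCompactSupport f}
  zero_mem' := ⟨IsLocallyConstant.const 0, by
    rw [hasCompactSupport_def]
    simp⟩
  add_mem' {a b} ha hb := ⟨ha.1.comp₂ hb.1 (· + ·), ha.2.add hb.2⟩
  smul_mem' c f hf := by
    refine ⟨?_, hf.2.mono (Function.support_const_smul_subset c f)⟩
    exact hf.1.comp (fun z => c * z)

@[simp] lemma mem_CcK (f : K → ℂ) :
    f ∈ CcK K ↔ IsLocallyConstant f ∧ HasCompactSupport f := Iff.rfl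

/-- `𝕊 = C_c^∞(k^×)`: locally constant, compactly supported functions on `k^×`. -/
def SSx : Submodule ℂ (Kˣ → ℂ) where
  carrier := {f | IsLocallyConstant f ∧ HasCompactSupport f}
  zero_mem' := ⟨IsLocallyConstant.const 0, by
    rw [hasCompactSupport_def]
    simp⟩
  add_mem' {a b} ha hb := ⟨ha.1.comp₂ hb.1 (· + ·), ha.2.add hb.2⟩
  smul_mem' c f hf := by
    refine ⟨?_, hf.2.mono (Function.support_const_smul_subset c f)⟩
    exact hf.1.comp (fun z => c * z)

@[simp] lemma mem_SSx (f : Kˣ → ℂ) :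
    f ∈ SSx K ↔ IsLocallyConstant f ∧ HasCompactSupport f := Iff.rfl

/-- `C_b^∞(k^×)`: locally constant functions on `k^×` whose support has compact closure
in `k`. -/
def Cb : Submodule ℂ (Kˣ → ℂ) where
  carrier := {f | IsLocallyConstant f ∧
    IsCompact (closure (((↑) : Kˣ → K) '' Function.support f))}
  zero_mem' := ⟨IsLocallyConstant.const 0, by simp⟩
  add_mem' {a b} ha hb := by
    refine ⟨ha.1.comp₂ hb.1 (· + ·), ?_⟩
    refine IsCompact.of_isClosed_subset (ha.2.union hb.2) isClosed_closure ?_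
    refine closure_minimal ?_ (ha.2.isClosed.union hb.2.isClosed)
    refine (Set.image_mono (Function.support_add _ _)).trans ?_
    rw [Set.image_union]
    exact Set.union_subset_union subset_closure subset_closure
  smul_mem' c f hf := by
    refine ⟨hf.1.comp (fun z => c * z), ?_⟩
    refine IsCompact.of_isClosed_subset hf.2 isClosed_closure ?_
    refine closure_mono ?_
    exact Set.image_mono (Function.support_const_smul_subset c f)

@[simp] lemma mem_Cb (f : Kˣ → ℂ) :
    f ∈ Cb K ↔ IsLocallyConstant f ∧
      IsCompact (closure (((↑) : Kˣ → K) '' Function.support f)) := Iff.rfl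

variable {K}

lemma SSx_invariant (ψ : AddChar K ℂ) (hψlc : IsLocallyConstant (⇑ψ)) :
    GRep.Invariant (repCx K ψ) (SSx K) := by
  rintro g f hf
  rw [mem_SSx] at hf ⊢
  obtain ⟨hlc, hcs⟩ := hf
  have heq : repCx K ψ g f
      = (fun x : Kˣ => ψ (g.s * (x : K))) * (f ∘ (Homeomorph.mulRight g.t)) := rfl
  constructor
  · rw [heq]
    refine IsLocallyConstant.mul ?_ ?_
    · exact hψlc.comp_continuous (continuous_const.mul Units.continuous_val)
    · exact hlc.comp_continuous (Homeomorph.mulRight g.t).continuous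
  · rw [heq]
    exact (hcs.comp_homeomorph (Homeomorph.mulRight g.t)).mul_left

lemma CcK_invariant (ψ : AddChar K ℂ) (hψlc : IsLocallyConstant (⇑ψ)) (χ : Kˣ →* ℂˣ) :
    GRep.Invariant (repCc K ψ χ) (CcK K) := by
  rintro g f hf
  rw [mem_CcK] at hf ⊢
  obtain ⟨hlc, hcs⟩ := hf
  have hne : ((g.t : Kˣ) : K) ≠ 0 := g.t.ne_zero
  have heq : repCc K ψ χ g f
      = (fun x : K => (χ g.t : ℂ) * ψ (g.s * x)) * (f ∘ (Homeomorph.mulRight₀ (g.t : K) hne)) :=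
    rfl
  constructor
  · rw [heq]
    refine IsLocallyConstant.mul ?_ ?_
    · exact ((hψlc.comp_continuous (continuous_const.mul continuous_id)).comp
        (fun z => (χ g.t : ℂ) * z))
    · exact hlc.comp_continuous (Homeomorph.mulRight₀ (g.t : K) hne).continuous
  · rw [heq]
    exact (hcs.comp_homeomorph (Homeomorph.mulRight₀ (g.t : K) hne)).mul_left

/-- The `TS`-module `𝕊 = C_c^∞(k^×)`. -/
def SRep (ψ : AddChar K ℂ) (hψlc : IsLocallyConstant (⇑ψ)) : Rep K ↥(SSx K) :=
  GRep.sub (repCx K ψ) (SSx_invariant ψ hψlc)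

/-- The `TS`-module `𝔼[χ]`, i.e. `C_c^∞(k)` with the `χ`-twisted action. -/
def ERep (ψ : AddChar K ℂ) (hψlc : IsLocallyConstant (⇑ψ)) (χ : Kˣ →* ℂˣ) : Rep K ↥(CcK K) :=
  GRep.sub (repCc K ψ χ) (CcK_invariant ψ hψlc χ)

/-- The `TS`-module `𝕊^s`, a direct sum of `s` copies of `𝕊`. -/
def SRepPow (ψ : AddChar K ℂ) (hψlc : IsLocallyConstant (⇑ψ)) (s : ℕ) :
    Rep K (Fin s → ↥(SSx K)) where
  toFun g := LinearMap.pi fun i => (SRep ψ hψlc g).comp (LinearMap.proj i)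
  map_one' := by
    apply LinearMap.ext; intro v; funext i
    simp
  map_mul' g h := by
    apply LinearMap.ext; intro v; funext i
    simp [map_mul]

/-- The submodule `E` of `C_b^∞(k^×)` consisting of functions which are `χ`-eigenvectors
modulo `𝕊`; the quotient `E/𝕊` is the `χ`-eigenspace of `C_b^∞(k^×)/𝕊`. -/
def quotEigen (ψ : AddChar K ℂ) (χ : Kˣ →* ℂˣ) : Submodule ℂ (Kˣ → ℂ) where
  carrier := {f | f ∈ Cb K ∧ ∀ u : Kˣ, repCx K ψ (Aff.xT u) f - (χ u : ℂ) • f ∈ SSx K}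
  zero_mem' := ⟨(Cb K).zero_mem, fun u => by simpa using (SSx K).zero_mem⟩
  add_mem' {a b} ha hb := by
    refine ⟨(Cb K).add_mem ha.1 hb.1, fun u => ?_⟩
    rw [map_add, smul_add, add_sub_add_comm]
    exact (SSx K).add_mem (ha.2 u) (hb.2 u)
  smul_mem' c f hf := by
    refine ⟨(Cb K).smul_mem c hf.1, fun u => ?_⟩
    rw [map_smul, smul_comm, ← smul_sub]
    exact (SSx K).smul_mem c (hf.2 u)

/-- Evaluation at `0 ∈ k`, realizing the quotient map `𝔼[χ] → ℂ_χ` with kernel `𝕊`. -/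
def ev0 : ↥(CcK K) →ₗ[ℂ] ℂ where
  toFun f := (f : K → ℂ) 0
  map_add' f g := rfl
  map_smul' c f := rfl

end Concrete

/-! ### The diagonal torus in GL(2). -/

section GL2

variable {K : Type*} [Field K]

/-- The diagonal element `diag(a, b)` of `GL(2, K)`. -/
def diagGL (a b : Kˣ) : Matrix.GeneralLinearGroup (Fin 2) K where
  val := Matrix.diagonal ![(a : K), (b : K)]
  inv := Matrix.diagonal ![((a : K))⁻¹, ((b : K))⁻¹]
  val_inv := by
    ext i j
    fin_cases i <;> fin_cases j <;>
      simp [Matrix.mul_apply, Fin.sum_univ_two, Matrix.diagonal, Matrix.one_apply,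
        a.ne_zero, b.ne_zero]
  inv_val := by
    ext i j
    fin_cases i <;> fin_cases j <;>
      simp [Matrix.mul_apply, Fin.sum_univ_two, Matrix.diagonal, Matrix.one_apply,
        a.ne_zero, b.ne_zero]

end GL2

section Statements

open Aff

variable {K : Type*} [NontriviallyNormedField K] [IsUltrametricDist K] [ProperSpace K]

lemma exists_min_char (ψ : AddChar K ℂ) (hψlc : IsLocallyConstant (⇑ψ)) (hψne : ψ ≠ 1) :
    ∃ c : K, ψ c ≠ 1 ∧ ∀ z : K, ‖z‖ < ‖c‖ → ψ z = 1 := by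
  have hcl : IsClosed {c : K | ψ c ≠ 1} := (hψlc.isOpen_fiber 1).isClosed_compl
  have hne : {c : K | ψ c ≠ 1}.Nonempty := by
    by_contra h
    apply hψne
    ext x
    by_contra hx
    exact h ⟨x, hx⟩
  obtain ⟨c, hc, hd⟩ := hcl.exists_infDist_eq_dist hne 0
  refine ⟨c, hc, fun z hz => ?_⟩
  by_contra hz1
  have := Metric.infDist_le_dist_of_mem (x := (0 : K)) (show z ∈ {c : K | ψ c ≠ 1} from hz1)
  rw [hd, dist_zero_left, dist_zero_left] at this
  linarith

lemma exists_sep (ψ : AddChar K ℂ) (hψlc : IsLocallyConstant (⇑ψ)) (hψne : ψ ≠ 1)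
    (δ : ℝ) (hδ : 0 < δ) (y : K) (hy : δ ≤ ‖y‖) :
    ∃ b : K, ψ (b * y) ≠ 1 ∧ ∀ z : K, ‖z‖ < δ → ψ (b * z) = 1 := by
  obtain ⟨c, hc, hz⟩ := exists_min_char ψ hψlc hψne
  have hy0 : 0 < ‖y‖ := hδ.trans_le hy
  have hyne : y ≠ 0 := norm_pos_iff.1 hy0
  have hc0 : 0 < ‖c‖ := by
    rw [norm_pos_iff]
    rintro rfl
    exact hc (by simp)
  refine ⟨c / y, by rwa [div_mul_cancel₀ _ hyne], fun z hzd => hz _ ?_⟩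
  rw [norm_mul, norm_div, div_mul_eq_mul_div, div_lt_iff₀ hy0]
  exact mul_lt_mul_of_pos_left (hzd.trans_le hy) hc0

lemma kill_finset (ψ : AddChar K ℂ) (hψlc : IsLocallyConstant (⇑ψ)) (hψne : ψ ≠ 1)
    (M : Submodule ℂ (Kˣ → ℂ)) (hMi : GRep.Invariant (repCx K ψ) M)
    (x₀ : K) (δ : ℝ) (hδ : 0 < δ) (f : Kˣ → ℂ) (hf : f ∈ M) (s : Finset K)
    (hs : ∀ y ∈ s, δ ≤ ‖x₀ - y‖) :
    ∃ h ∈ M, (∀ x : Kˣ, ‖(x : K) - x₀‖ < δ → h x = f x) ∧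
      (∀ x : Kˣ, f x = 0 → h x = 0) ∧
      ∀ y ∈ s, ∀ x : Kˣ, ‖(x : K) - y‖ < δ → h x = 0 := by
  induction s using Finset.induction_on with
  | empty => exact ⟨f, hf, fun _ _ => rfl, fun _ h => h, by simp⟩
  | insert a s has ih =>
    obtain ⟨h, hM, h1, h2, h3⟩ := ih fun y hy => hs y (Finset.mem_insert_of_mem hy)
    obtain ⟨b, hb, hz⟩ := exists_sep ψ hψlc hψne δ hδ (x₀ - a)
      (hs a (Finset.mem_insert_self a s))
    have key : ∀ x y : K, ‖x - y‖ < δ → ψ (b * x) = ψ (b * y) := by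
      intro x y hxy
      have : b * x = b * (x - y) + b * y := by ring
      rw [this, AddChar.map_add_eq_mul, hz _ hxy, one_mul]
    have hne : ψ (b * x₀) - ψ (b * a) ≠ 0 := by
      intro h0
      apply hb
      have e : b * x₀ = b * (x₀ - a) + b * a := by ring
      rw [e, AddChar.map_add_eq_mul] at h0
      have ha : ψ (b * a) ≠ 0 := by
        intro h00
        have : ψ (b * a + -(b * a)) = 1 := by simp
        rw [AddChar.map_add_eq_mul, h00, zero_mul] at this
        exact zero_ne_one this
      have : (ψ (b * (x₀ - a)) - 1) * ψ (b * a) = 0 := by linear_combination h0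
      rcases mul_eq_zero.1 this with h' | h'
      · exact sub_eq_zero.1 h'
      · exact absurd h' ha
    have hap : ∀ x : Kˣ, ((ψ (b * x₀) - ψ (b * a))⁻¹ •
        (repCx K ψ (sS b) h - ψ (b * a) • h)) x
        = (ψ (b * x₀) - ψ (b * a))⁻¹ * ((ψ (b * x) - ψ (b * a)) * h x) := by
      intro x
      simp [sub_mul]
    refine ⟨(ψ (b * x₀) - ψ (b * a))⁻¹ • (repCx K ψ (sS b) h - ψ (b * a) • h),
      M.smul_mem _ (M.sub_mem (hMi _ _ hM) (M.smul_mem _ hM)), ?_, ?_, ?_⟩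
    · intro x hx
      rw [hap, key _ _ hx, h1 x hx, inv_mul_cancel_left₀ hne]
    · intro x hx
      rw [hap, h2 x hx, mul_zero, mul_zero]
    · intro y hy x hx
      rw [hap]
      rcases Finset.mem_insert.1 hy with rfl | hy
      · rw [key _ _ hx, sub_self, zero_mul, mul_zero]
      · rw [h3 y hy x hx, mul_zero, mul_zero]

lemma indicator_mem (ψ : AddChar K ℂ) (hψlc : IsLocallyConstant (⇑ψ)) (hψne : ψ ≠ 1)
    (M : Submodule ℂ (Kˣ → ℂ)) (hMi : GRep.Invariant (repCx K ψ) M) (hMle : M ≤ Cb K)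
    (x₀ : K) (δ : ℝ) (hδ : 0 < δ) (f : Kˣ → ℂ) (hf : f ∈ M) :
    {x : Kˣ | ‖(x : K) - x₀‖ < δ}.indicator f ∈ M := by
  have hc := (hMle hf).2
  set C := closure (((↑) : Kˣ → K) '' Function.support f) with hC
  have hD : IsCompact (C \ Metric.ball x₀ δ) := hc.diff Metric.isOpen_ball
  obtain ⟨t, ht, htc⟩ := hD.elim_nhds_subcover (fun y => Metric.ball y δ)
    (fun y _ => Metric.ball_mem_nhds y hδ)
  obtain ⟨h, hM, h1, h2, h3⟩ := kill_finset ψ hψlc hψne M hMi x₀ δ hδ f hf t (by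
    intro y hy
    have := (ht y hy).2
    rw [Metric.mem_ball, not_lt, dist_comm, dist_eq_norm] at this
    exact this)
  convert hM using 1
  funext x
  by_cases hx : ‖(x : K) - x₀‖ < δ
  · rw [Set.indicator_of_mem (by exact hx), h1 x hx]
  · rw [Set.indicator_of_notMem (by exact hx)]
    by_cases hfx : f x = 0
    · exact (h2 x hfx).symm
    · have hmem : (x : K) ∈ C \ Metric.ball x₀ δ :=
        ⟨subset_closure ⟨x, hfx, rfl⟩, by rwa [Metric.mem_ball, dist_eq_norm]⟩
      obtain ⟨y, hy, hxy⟩ := Set.mem_iUnion₂.1 (htc hmem)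
      rw [Metric.mem_ball, dist_eq_norm] at hxy
      exact (h3 y hy x hxy).symm

lemma SSx_le (ψ : AddChar K ℂ) (hψlc : IsLocallyConstant (⇑ψ)) (hψne : ψ ≠ 1)
    (M : Submodule ℂ (Kˣ → ℂ)) (hMi : GRep.Invariant (repCx K ψ) M)
    (hMle : M ≤ Cb K) (hMne : M ≠ ⊥) : SSx K ≤ M := by
  obtain ⟨f, hf, hf0⟩ := Submodule.exists_mem_ne_zero_of_ne_bot hMne
  obtain ⟨u₀, hu₀⟩ := Function.ne_iff.1 hf0
  rintro g ⟨hglc, hgc⟩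
  have main : ∃ T : Set Kˣ, tsupport g ⊆ T ∧ (∀ f ∈ M, T.indicator f ∈ M) ∧
      T.indicator g ∈ M := by
    refine IsCompact.induction_on (p := fun s => ∃ T : Set Kˣ, s ⊆ T ∧
      (∀ f ∈ M, T.indicator f ∈ M) ∧ T.indicator g ∈ M) hgc ?_ ?_ ?_ ?_
    · exact ⟨∅, le_rfl, fun f _ => by rw [Set.indicator_empty]; exact M.zero_mem,
        by rw [Set.indicator_empty]; exact M.zero_mem⟩
    · rintro s t hst ⟨T, h1, h2⟩
      exact ⟨T, hst.trans h1, h2⟩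
    · rintro s t ⟨T, h1, h2, h3⟩ ⟨T', h1', h2', h3'⟩
      have e : ∀ f : Kˣ → ℂ, (T ∪ T').indicator f
          = T.indicator f + T'.indicator f - T.indicator (T'.indicator f) := by
        intro f
        funext x
        by_cases hT : x ∈ T <;> by_cases hT' : x ∈ T' <;> simp [Set.indicator, hT, hT']
      refine ⟨T ∪ T', Set.union_subset_union h1 h1', fun f hf => ?_, ?_⟩
      · rw [e]
        exact M.sub_mem (M.add_mem (h2 f hf) (h2' f hf)) (h2 _ (h2' f hf))
      · rw [e]
        exact M.sub_mem (M.add_mem h3 h3') (h2 _ h3')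
    · intro u _
      obtain ⟨k, hk, hku⟩ : ∃ k ∈ M, k u = g u := by
        refine ⟨(g u / f u₀) • repCx K ψ (xT (u⁻¹ * u₀)) f, M.smul_mem _ (hMi _ _ hf), ?_⟩
        have : f u₀ ≠ 0 := hu₀
        simp [this]
      have hev : ∀ᶠ x in nhds u, k x = g x := by
        filter_upwards [(hMle hk).1.eventually_eq u, hglc.eventually_eq u] with x h1 h2
        rw [h1, h2, hku]
      rw [(Units.isEmbedding_val₀ (G₀ := K)).nhds_eq_comap u,
        (Metric.nhds_basis_ball.comap _).eventually_iff] at hev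
      obtain ⟨δ, hδ, hball⟩ := hev
      refine ⟨{x : Kˣ | ‖(x : K) - (u : K)‖ < δ}, ?_, {x : Kˣ | ‖(x : K) - (u : K)‖ < δ}, le_rfl,
        fun f hf => indicator_mem ψ hψlc hψne M hMi hMle u δ hδ f hf, ?_⟩
      · apply mem_nhdsWithin_of_mem_nhds
        refine IsOpen.mem_nhds ?_ (by simpa using hδ)
        exact isOpen_lt ((Units.continuous_val.sub continuous_const).norm) continuous_const
      · have := indicator_mem ψ hψlc hψne M hMi hMle u δ hδ k hk
        convert this using 1
        apply Set.indicator_congr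
        intro x hx
        exact (hball (by simpa [dist_eq_norm] using hx)).symm
  obtain ⟨T, hT, -, hg⟩ := main
  rwa [Set.indicator_eq_self.2 ((subset_tsupport g).trans hT)] at hg

lemma sS_sub_mem (ψ : AddChar K ℂ) (hψlc : IsLocallyConstant (⇑ψ)) (f : Kˣ → ℂ)
    (hf : f ∈ Cb K) (b : K) : repCx K ψ (sS b) f - f ∈ SSx K := by
  obtain ⟨hlc, hc⟩ := hf
  have heq : repCx K ψ (sS b) f - f = fun x : Kˣ => (ψ (b * x) - 1) * f x := by
    funext x
    simp [sub_mul]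
  have hlc2 : IsLocallyConstant (fun x : K => ψ (b * x)) :=
    hψlc.comp_continuous (continuous_const.mul continuous_id)
  rw [heq]
  constructor
  · exact IsLocallyConstant.mul ((hlc2.comp_continuous Units.continuous_val).comp (· - 1)) hlc
  · set C := closure (((↑) : Kˣ → K) '' Function.support f) with hC
    have hD : IsCompact (C ∩ {x : K | ψ (b * x) ≠ 1}) :=
      hc.inter_right (hlc2.isOpen_fiber 1).isClosed_compl
    have hE : IsCompact (((↑) : Kˣ → K) ⁻¹' (C ∩ {x : K | ψ (b * x) ≠ 1})) := by
      rw [(Units.isEmbedding_val₀ (G₀ := K)).isCompact_iff, Set.image_preimage_eq_of_subset]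
      · exact hD
      · rintro x ⟨-, hx⟩
        refine ⟨Units.mk0 x ?_, rfl⟩
        rintro rfl
        exact hx (by simp)
    refine HasCompactSupport.intro hE fun x hx => ?_
    by_contra hne
    obtain ⟨h1, h2⟩ := mul_ne_zero_iff.1 hne
    exact hx ⟨subset_closure ⟨x, h2, rfl⟩, sub_ne_zero.1 h1⟩

theorem statement1
    (hchar : (2 : K) ≠ 0)
    (ψ : AddChar K ℂ) (hψlc : IsLocallyConstant (⇑ψ)) (hψne : ψ ≠ 1)
    (M : Submodule ℂ (Kˣ → ℂ)) (hMi : GRep.Invariant (repCx K ψ) M)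
    (hMle : M ≤ Cb K) (hMne : M ≠ ⊥) :
    SSx K ≤ M ∧ ∀ b : K, ∀ f ∈ M, repCx K ψ (sS b) f - f ∈ SSx K := by
  exact ⟨SSx_le ψ hψlc hψne M hMi hMle hMne,
    fun b f hf => sS_sub_mem ψ hψlc f (hMle hf) b⟩

end Statements

end PSW
end
end

section
/- For every TS-module M one has M^S = ⋂_{ψ'≠1} ker(M → M_{S,ψ'}), the intersection over all nontrivial smooth characters ψ' of S. In other words, an element m ∈ M is invariant under S if and only if, for every nontrivial smooth character ψ' of S, m is a finite linear combination of elements of the form s·w − ψ'(s)·w with s ∈ S, w ∈ M. -/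
noncomputable section

open scoped Classical

namespace PSW

section Helpers

open Aff

variable {K : Type*} [NontriviallyNormedField K] [IsUltrametricDist K] [ProperSpace K]
variable {V : Type*} [AddCommGroup V] [Module ℂ V]

lemma hp_sS_add {K : Type*} [Field K] (b c : K) : (sS (b + c) : Aff K) = sS b * sS c := by
  ext <;> simp

lemma hp_sS_zero {K : Type*} [Field K] : (sS (0 : K) : Aff K) = 1 := rfl

lemma hp_rho_add (ρ : Rep K V) (b c : K) (v : V) :
    ρ (sS (b + c)) v = ρ (sS b) (ρ (sS c) v) := by
  rw [hp_sS_add, map_mul, Module.End.mul_apply]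

lemma hp_open (ρ : Rep K V) (hρ : IsSmoothRep ρ) (v : V) :
    IsOpen {b : K | ρ (sS b) v = v} := by
  have hc : Continuous (sS : K → Aff K) :=
    continuous_induced_rng.2 (continuous_const.prodMk continuous_id)
  exact (hρ v).preimage hc

lemma hp_sub (ρ : Rep K V) (b c : K) (v : V)
    (h : ρ (sS b) v = ρ (sS c) v) : ρ (sS (b - c)) v = v := by
  have : ρ (sS (-c + b)) v = v := by
    rw [hp_rho_add, h, ← hp_rho_add]
    simp [hp_sS_zero]
  rwa [sub_eq_neg_add]

lemma hp_torsion (ρ : Rep K V) (hρ : IsSmoothRep ρ) (v : V) (b : K) :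
    ∃ N : ℕ, 0 < N ∧ ρ (sS (N • b)) v = v := by
  have hb : ∀ n : ℕ, n • b ∈ Metric.closedBall (0 : K) ‖b‖ := by
    intro n
    rw [mem_closedBall_zero_iff, nsmul_eq_mul, norm_mul]
    exact mul_le_of_le_one_left (norm_nonneg _) (IsUltrametricDist.norm_natCast_le_one K n)
  obtain ⟨a, -, φ, hφ, hlim⟩ := (isCompact_closedBall (0 : K) ‖b‖).tendsto_subseq hb
  have h1 : Filter.Tendsto (fun n => φ (n + 1) • b - φ n • b) Filter.atTop (nhds (a - a)) :=
    (hlim.comp (Filter.tendsto_add_atTop_nat 1)).sub hlim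
  rw [sub_self] at h1
  have h2 : {c : K | ρ (sS c) v = v} ∈ nhds (0 : K) :=
    (hp_open ρ hρ v).mem_nhds (by simp [hp_sS_zero])
  obtain ⟨n, hn⟩ := (h1.eventually h2).exists
  have hlt : φ n < φ (n + 1) := hφ (Nat.lt_succ_self n)
  refine ⟨φ (n + 1) - φ n, Nat.sub_pos_of_lt hlt, ?_⟩
  rw [sub_nsmul _ hlt.le, ← sub_eq_add_neg]
  exact hn

/-- The action of `S` as a monoid hom. -/
def hpHom (ρ : Rep K V) : Multiplicative K →* Module.End ℂ V where
  toFun b := ρ (sS b.toAdd)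
  map_one' := by simp [hp_sS_zero]
  map_mul' b c := by simp [hp_sS_add]

/-- The action of the group algebra of `S`. -/
def hpAlg (ρ : Rep K V) : AddMonoidAlgebra ℂ K →ₐ[ℂ] Module.End ℂ V :=
  AddMonoidAlgebra.lift ℂ (Module.End ℂ V) K (hpHom ρ)

lemma hpAlg_single (ρ : Rep K V) (b : K) :
    hpAlg ρ (AddMonoidAlgebra.single b 1) = ρ (sS b) := by
  simp [hpAlg, hpHom]

/-- The annihilator of a vector. -/
def hpAnn (ρ : Rep K V) (v : V) : Ideal (AddMonoidAlgebra ℂ K) where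
  carrier := {a | hpAlg ρ a v = 0}
  zero_mem' := by simp
  add_mem' {a b} ha hb := by
    simp only [Set.mem_setOf_eq] at *
    simp [ha, hb]
  smul_mem' c a ha := by
    simp only [Set.mem_setOf_eq] at *
    simp [ha]

lemma hp_exists_hom (ρ : Rep K V) (hρ : IsSmoothRep ρ) (v : V) (hv : v ≠ 0) :
    ∃ f : AddMonoidAlgebra ℂ K →ₐ[ℂ] ℂ, ∀ a, hpAlg ρ a v = 0 → f a = 0 := by
  have hne : hpAnn ρ v ≠ ⊤ := by
    rw [Ideal.ne_top_iff_one]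
    intro h
    have h' : hpAlg ρ 1 v = 0 := h
    simp at h'
    exact hv h'
  obtain ⟨𝔪, hm, hle⟩ := Ideal.exists_le_maximal _ hne
  letI : Field (AddMonoidAlgebra ℂ K ⧸ 𝔪) := Ideal.Quotient.field 𝔪
  have hint : Algebra.IsIntegral ℂ (AddMonoidAlgebra ℂ K ⧸ 𝔪) := by
    constructor
    intro x
    obtain ⟨a, rfl⟩ := Ideal.Quotient.mk_surjective x
    induction a using AddMonoidAlgebra.induction_on with
    | of b =>
      obtain ⟨N, hN, hb⟩ := hp_torsion ρ hρ v b
      apply IsIntegral.of_pow hN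
      rw [← map_pow]
      have : Ideal.Quotient.mk 𝔪 (AddMonoidAlgebra.of ℂ K (Multiplicative.ofAdd b) ^ N)
          = Ideal.Quotient.mk 𝔪 1 := by
        rw [Ideal.Quotient.eq]
        apply hle
        show hpAlg ρ _ v = 0
        rw [map_sub, map_one, AddMonoidAlgebra.of_apply, toAdd_ofAdd, AddMonoidAlgebra.single_pow, one_pow,
          hpAlg_single, LinearMap.sub_apply, hb]
        simp
      rw [this, map_one]
      exact isIntegral_one
    | add a b ha hb => rw [map_add]; exact ha.add hb
    | smul c a ha =>
      have : Ideal.Quotient.mk 𝔪 (c • a) = c • Ideal.Quotient.mk 𝔪 a := rfl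
      rw [this]; exact ha.smul c
  let e := AlgEquiv.ofBijective (Algebra.ofId ℂ (AddMonoidAlgebra ℂ K ⧸ 𝔪))
    IsAlgClosed.algebraMap_bijective_of_isIntegral
  refine ⟨e.symm.toAlgHom.comp (Ideal.Quotient.mkₐ ℂ 𝔪), fun a ha => ?_⟩
  have : Ideal.Quotient.mkₐ ℂ 𝔪 a = 0 := Ideal.Quotient.eq_zero_iff_mem.2 (hle ha)
  rw [AlgHom.comp_apply, this, map_zero]

/-- The additive character attached to a hom from the group algebra. -/
def hpChar (f : AddMonoidAlgebra ℂ K →ₐ[ℂ] ℂ) : AddChar K ℂ where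
  toFun b := f (AddMonoidAlgebra.single b 1)
  map_zero_eq_one' := by
    rw [← AddMonoidAlgebra.one_def, map_one]
  map_add_eq_mul' b c := by
    rw [← map_mul, AddMonoidAlgebra.single_mul_single, one_mul]

lemma hpChar_apply (f : AddMonoidAlgebra ℂ K →ₐ[ℂ] ℂ) (b : K) :
    hpChar f b = f (AddMonoidAlgebra.single b 1) := rfl

lemma hpChar_stab (ρ : Rep K V) (v : V) (f : AddMonoidAlgebra ℂ K →ₐ[ℂ] ℂ)
    (hf : ∀ a, hpAlg ρ a v = 0 → f a = 0) (b : K) (hb : ρ (sS b) v = v) :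
    hpChar f b = 1 := by
  have := hf (AddMonoidAlgebra.single b 1 - 1) (by
    rw [map_sub, hpAlg_single, LinearMap.sub_apply, hb]; simp)
  rw [map_sub, map_one, sub_eq_zero] at this
  exact this

lemma hp_key (ρ : Rep K V) (hρ : IsSmoothRep ρ) (v : V)
    (h : ∀ ψ' : AddChar K ℂ, IsLocallyConstant (⇑ψ') → v ∈ sTwistKer ρ ψ') : v = 0 := by
  by_contra hv
  obtain ⟨f, hf⟩ := hp_exists_hom ρ hρ v hv
  have hlc : IsLocallyConstant (⇑(hpChar f)) := by
    rw [IsLocallyConstant.iff_eventually_eq]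
    intro x
    have h2 : {c : K | ρ (sS c) v = v} ∈ nhds (x - x) :=
      (hp_open ρ hρ v).mem_nhds (by simp [hp_sS_zero])
    have h3 : Filter.Tendsto (fun y : K => y - x) (nhds x) (nhds (x - x)) :=
      (continuous_id.sub continuous_const).tendsto x
    filter_upwards [h3.eventually h2] with y hy
    have h4 := hpChar_stab ρ v f hf _ hy
    have : hpChar f y = hpChar f ((y - x) + x) := by rw [sub_add_cancel]
    rw [this, AddChar.map_add_eq_mul, h4, one_mul]
  have main : ∀ w ∈ sTwistKer ρ (hpChar f), ∃ a, hpAlg ρ a w = 0 ∧ f a ≠ 0 := by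
    intro w hmem
    unfold sTwistKer at hmem
    induction hmem using Submodule.span_induction with
    | mem w hw =>
      obtain ⟨b, u, rfl⟩ := hw
      obtain ⟨N, hN, hNu⟩ := hp_torsion ρ hρ u b
      obtain ⟨M, hM, hMv⟩ := hp_torsion ρ hρ v b
      have hψM : hpChar f b ^ M = 1 := by
        rw [← AddChar.map_nsmul_eq_pow]; exact hpChar_stab ρ v f hf _ hMv
      have hψ0 : hpChar f b ≠ 0 := by
        intro h0; rw [h0, zero_pow hM.ne'] at hψM; exact zero_ne_one hψM
      have hit : (ρ (sS b)) ^ (N * M) • u = u := by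
        have h1 : (ρ (sS b)) ^ N = ρ (sS (N • b)) := by
          rw [← hpAlg_single, ← map_pow, AddMonoidAlgebra.single_pow, one_pow, hpAlg_single]
        rw [pow_mul, h1]
        clear hM hMv hψM
        induction M with
        | zero => simp
        | succ n ih => 
          rw [pow_succ, mul_smul]
          simp only [Module.End.smul_def] at ih ⊢
          rw [hNu, ih]
      set x : AddMonoidAlgebra ℂ K := AddMonoidAlgebra.single b 1 with hx
      set y : AddMonoidAlgebra ℂ K := algebraMap ℂ _ (hpChar f b) with hy
      have hfx : f x = hpChar f b := rfl
      have hfy : f y = hpChar f b := by rw [hy, AlgHom.commutes]; rfl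
      refine ⟨∑ i ∈ Finset.range (N * M), x ^ i * y ^ (N * M - 1 - i), ?_, ?_⟩
      · have h1 : ρ (sS b) u - hpChar f b • u = hpAlg ρ (x - y) u := by
          rw [map_sub, hx, hpAlg_single, hy, AlgHom.commutes]
          simp
        have h2 : hpAlg ρ (x ^ (N * M)) = ρ (sS b) ^ (N * M) := by
          rw [map_pow (hpAlg ρ), hx, hpAlg_single]
        have h3 : y ^ (N * M) = 1 := by
          rw [hy, ← map_pow (algebraMap ℂ (AddMonoidAlgebra ℂ K)), mul_comm N M, pow_mul, hψM,
            one_pow, map_one]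
        rw [h1, ← Module.End.mul_apply, ← map_mul, geom_sum₂_mul, map_sub, h2, h3, map_one,
          LinearMap.sub_apply]
        rw [Module.End.smul_def] at hit
        rw [hit]; simp
      · rw [map_sum]
        simp only [map_mul, map_pow, hfx, hfy]
        rw [geom_sum₂_self]
        refine mul_ne_zero ?_ (pow_ne_zero _ hψ0)
        exact_mod_cast (Nat.mul_pos hN hM).ne'
    | zero => exact ⟨1, by simp, by simp⟩
    | add w₁ w₂ _ _ h₁ h₂ =>
      obtain ⟨a₁, ha₁, hf₁⟩ := h₁
      obtain ⟨a₂, ha₂, hf₂⟩ := h₂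
      refine ⟨a₁ * a₂, ?_, by rw [map_mul]; exact mul_ne_zero hf₁ hf₂⟩
      have e1 : hpAlg ρ (a₁ * a₂) w₁ = 0 := by
        rw [mul_comm, map_mul, Module.End.mul_apply, ha₁, map_zero]
      have e2 : hpAlg ρ (a₁ * a₂) w₂ = 0 := by
        rw [map_mul, Module.End.mul_apply, ha₂, map_zero]
      rw [map_add, e1, e2, add_zero]
    | smul c w _ hw =>
      obtain ⟨a, ha, hfa⟩ := hw
      exact ⟨a, by rw [map_smul, ha, smul_zero], hfa⟩
  obtain ⟨a, ha, hfa⟩ := main v (h _ hlc)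
  exact hfa (hf a ha)

lemma hp_twist_stable (ρ : Rep K V) (ψ' : AddChar K ℂ) (m : V) (hm : m ∈ sTwistKer ρ ψ') (c : K) :
    ρ (sS c) m ∈ sTwistKer ρ ψ' := by
  have h : sTwistKer ρ ψ' ≤ (sTwistKer ρ ψ').comap (ρ (sS c)) := by
    refine Submodule.span_le.2 ?_
    rintro w ⟨b, u, rfl⟩
    simp only [SetLike.mem_coe, Submodule.mem_comap, map_sub, map_smul]
    rw [← hp_rho_add, add_comm, hp_rho_add]
    exact Submodule.subset_span ⟨b, _, rfl⟩
  exact h hm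

lemma hp_main (ρ : Rep K V) (hρ : IsSmoothRep ρ) (m : V) : m ∈ sInv ρ ↔
      ∀ ψ' : AddChar K ℂ, IsLocallyConstant (⇑ψ') → ψ' ≠ 1 → m ∈ sTwistKer ρ ψ' := by
  constructor
  · intro hm ψ' _ hne
    obtain ⟨b, hb⟩ := AddChar.ne_one_iff.1 hne
    have h1 : ρ (sS b) m - ψ' b • m ∈ sTwistKer ρ ψ' := Submodule.subset_span ⟨b, m, rfl⟩
    rw [(mem_sInv ρ m).1 hm b] at h1
    have h2 : m - ψ' b • m = (1 - ψ' b) • m := by rw [sub_smul, one_smul]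
    rw [h2] at h1
    exact (Submodule.smul_mem_iff _ (sub_ne_zero.2 (Ne.symm hb))).1 h1
  · intro h b
    rw [← sub_eq_zero]
    refine hp_key ρ hρ _ fun ψ' hlc => ?_
    by_cases hψ : ψ' = 1
    · subst hψ
      exact Submodule.subset_span ⟨b, m, by simp⟩
    · exact Submodule.sub_mem _ (hp_twist_stable ρ ψ' m (h ψ' hlc hψ) b) (h ψ' hlc hψ)

end Helpers

section Statements

open Aff

variable {K : Type*} [NontriviallyNormedField K] [IsUltrametricDist K] [ProperSpace K]

theorem statement2
    (hchar : (2 : K) ≠ 0)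
    {V : Type*} [AddCommGroup V] [Module ℂ V]
    (ρ : Rep K V) (hρ : IsSmoothRep ρ) :
    sInv ρ = (⨅ (ψ' : AddChar K ℂ) (_ : IsLocallyConstant (⇑ψ')) (_ : ψ' ≠ 1),
      sTwistKer ρ ψ') ∧
    ∀ m : V, m ∈ sInv ρ ↔
      ∀ ψ' : AddChar K ℂ, IsLocallyConstant (⇑ψ') → ψ' ≠ 1 → m ∈ sTwistKer ρ ψ' := by
  refine ⟨?_, hp_main ρ hρ⟩
  ext m
  rw [hp_main ρ hρ m]
  simp only [Submodule.mem_iInf]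

end Statements

end PSW
end
end

section
/- For every TS-module M, the canonical map from the S-invariants M^S to the S-coinvariants M_S (the composition of the inclusion M^S ⊆ M with the quotient map M → M_S) is injective. -/
noncomputable section

open scoped Classical

namespace PSW

section Statements

open Aff

variable {K : Type*} [NontriviallyNormedField K] [IsUltrametricDist K] [ProperSpace K]

lemma aux_mul {V : Type*} [AddCommGroup V] [Module ℂ V] (ρ : Rep K V) (a b : K) : ρ (sS a) * ρ (sS b) = ρ (sS (a + b)) := by
  rw [← map_mul]
  congr 1
  ext <;> simp

lemma aux_mult (b : K) (δ : ℝ) (hδ : 0 < δ) : ∃ n : ℕ, 0 < n ∧ ‖(n : K) * b‖ < δ := by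
  have hb : Bornology.IsBounded (Metric.closedBall (0 : K) ‖b‖) := Metric.isBounded_closedBall
  have hmem : ∀ n : ℕ, (n : K) * b ∈ Metric.closedBall (0 : K) ‖b‖ := by
    intro n
    rw [mem_closedBall_zero_iff, norm_mul]
    exact mul_le_of_le_one_left (norm_nonneg _) (IsUltrametricDist.norm_natCast_le_one K n)
  obtain ⟨a, -, φ, hφ, hlim⟩ := tendsto_subseq_of_bounded hb hmem
  obtain ⟨N, hN⟩ := Metric.cauchySeq_iff.1 hlim.cauchySeq δ hδ
  have h := hN (N + 1) (Nat.le_succ N) N le_rfl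
  have hlt : φ N < φ (N + 1) := hφ (Nat.lt_succ_self N)
  refine ⟨φ (N + 1) - φ N, Nat.sub_pos_of_lt hlt, ?_⟩
  rw [dist_eq_norm] at h
  simp only [Function.comp] at h
  rwa [Nat.cast_sub hlt.le, sub_mul]

lemma aux_fix {V : Type*} [AddCommGroup V] [Module ℂ V] (ρ : Rep K V) (hρ : IsSmoothRep ρ) (b : K) (v : V) :
    ∃ n : ℕ, 0 < n ∧ ρ (sS ((n : K) * b)) v = v := by
  have hc : Continuous (fun b : K => (sS b : Aff K)) :=
    continuous_induced_rng.2 (continuous_const.prodMk continuous_id)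
  have ho : IsOpen {b : K | ρ (sS b) v = v} := (hρ v).preimage hc
  have h0 : (0 : K) ∈ {b : K | ρ (sS b) v = v} := by
    show ρ (sS 0) v = v
    rw [show (sS (0 : K) : Aff K) = 1 from rfl, map_one]
    rfl
  obtain ⟨δ, hδ, hsub⟩ := Metric.isOpen_iff.1 ho 0 h0
  obtain ⟨n, hn, hlt⟩ := aux_mult b δ hδ
  exact ⟨n, hn, hsub (by rwa [mem_ball_zero_iff])⟩

lemma aux_avg {V : Type*} [AddCommGroup V] [Module ℂ V] (ρ : Rep K V) (hρ : IsSmoothRep ρ) (w : V) (hw : w ∈ sCoinvKer ρ) :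
    ∃ A : Module.End ℂ V,
      (∀ B : Module.End ℂ V, (∀ b, Commute B (ρ (sS b))) → Commute B A) ∧
      (∀ v ∈ sInv ρ, A v = v) ∧ A w = 0 := by
  have hcomm : ∀ A : Module.End ℂ V,
      (∀ B : Module.End ℂ V, (∀ b, Commute B (ρ (sS b))) → Commute B A) →
      ∀ b, Commute A (ρ (sS b)) := by
    intro A hA b
    refine (hA _ fun c => ?_).symm
    show _ * _ = _ * _
    rw [aux_mul, aux_mul, add_comm]
  induction hw using Submodule.span_induction with
  | mem x hx =>
    obtain ⟨b, v, rfl⟩ := hx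
    obtain ⟨n, hn, hfix⟩ := aux_fix ρ hρ b v
    have hn' : (n : ℂ) ≠ 0 := by exact_mod_cast hn.ne'
    refine ⟨(n : ℂ)⁻¹ • ∑ j ∈ Finset.range n, ρ (sS ((j : K) * b)), ?_, ?_, ?_⟩
    · intro B hB
      exact (Commute.sum_right _ _ _ fun j _ => hB _).smul_right _
    · intro u hu
      rw [LinearMap.smul_apply, LinearMap.sum_apply, Finset.sum_congr rfl fun j _ => hu _]
      rw [Finset.sum_const, Finset.card_range, ← Nat.cast_smul_eq_nsmul ℂ, smul_smul,
        inv_mul_cancel₀ hn', one_smul]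
    · rw [LinearMap.smul_apply, LinearMap.sum_apply]
      have : ∀ j ∈ Finset.range n, ρ (sS ((j : K) * b)) (ρ (sS b) v - v) =
          ρ (sS (((j + 1 : ℕ) : K) * b)) v - ρ (sS ((j : K) * b)) v := by
        intro j _
        rw [map_sub, ← Module.End.mul_apply, aux_mul]
        push_cast
        rw [add_mul, one_mul]
      rw [Finset.sum_congr rfl this, Finset.sum_range_sub (fun j : ℕ => ρ (sS ((j : K) * b)) v),
        hfix, Nat.cast_zero, zero_mul, show (sS (0 : K) : Aff K) = 1 from rfl, map_one,
        Module.End.one_apply, sub_self, smul_zero]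
  | zero => exact ⟨1, fun B _ => Commute.one_right B, fun v _ => rfl, map_zero _⟩
  | add x y _ _ hx hy =>
    obtain ⟨A, hA, hA1, hA2⟩ := hx
    obtain ⟨C, hC, hC1, hC2⟩ := hy
    refine ⟨A * C, fun B hB => (hA B hB).mul_right (hC B hB), fun v hv => ?_, ?_⟩
    · rw [Module.End.mul_apply, hC1 v hv, hA1 v hv]
    · have hAC : A * C = C * A := hC A (hcomm A hA)
      rw [map_add, hAC, Module.End.mul_apply, hA2, map_zero, zero_add, ← hAC,
        Module.End.mul_apply, hC2, map_zero]
  | smul c x _ hx =>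
    obtain ⟨A, hA, hA1, hA2⟩ := hx
    exact ⟨A, hA, hA1, by rw [map_smul, hA2, smul_zero]⟩

theorem statement3
    (hchar : (2 : K) ≠ 0)
    {V : Type*} [AddCommGroup V] [Module ℂ V]
    (ρ : Rep K V) (hρ : IsSmoothRep ρ) :
    Function.Injective ((sCoinvKer ρ).mkQ.comp (sInv ρ).subtype) := by
  rw [← LinearMap.ker_eq_bot, LinearMap.ker_eq_bot']
  rintro ⟨v, hv⟩ h
  have hv' : v ∈ sCoinvKer ρ := by
    simpa using h
  obtain ⟨A, -, hA1, hA2⟩ := aux_avg ρ hρ v hv'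
  apply Subtype.ext
  show v = 0
  rw [← hA1 v hv, hA2]

end Statements

end PSW
end
end
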